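/- Let G be a countable group and let u be a free infinitary Schur ultrafilter on G. Then u is not a P-point. -/

import Mathlib

/-- An ultrafilter is *free* if it contains no finite set. -/
def IsFreeUltrafilter {X : Type*} (u : Ultrafilter X) : Prop :=
  ∀ A ∈ u, ¬ A.Finite

/-- An ultrafilter `u` on a multiplicative semigroup is *infinitary Schur* if for each
`U ∈ u` there exist `a ∈ U` and an infinite subset `B ⊆ U` with `a • B ⊆ U`. -/
def IsInfSchurUltrafilter {S : Type*} [Mul S] (u : Ultrafilter S) : Prop :=
  ∀ U ∈ u, ∃ a ∈ U, ∃ B ⊆ U, B.Infinite ∧ ∀ b ∈ B, a * b ∈ U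

/-- An ultrafilter `u` on a countable set is a *P-point* if for every countable
family `{U n : n ∈ ℕ} ⊆ u` there exists `U ∈ u` with `U \ U n` finite for all `n`. -/
def IsPPoint {X : Type*} (u : Ultrafilter X) : Prop :=
  ∀ f : ℕ → Set X, (∀ n, f n ∈ u) → ∃ U ∈ u, ∀ n, (U \ f n).Finite

theorem aux_parity {G : Type*} [Group G] (u : Ultrafilter G) (b : G) (Q : Set G)
    (hQ : Q ∈ u) (h : ∀ x, ∃ k : ℕ, b ^ k * x ∉ Q) :
    ∃ V ∈ u, ∀ x ∈ V, b * x ∉ V := by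
  classical
  have key : ∀ x ∈ Q, Nat.find (h x) = Nat.find (h (b * x)) + 1 := by
    intro x hx
    rw [Nat.find_eq_iff]
    constructor
    · have := Nat.find_spec (h (b * x))
      rwa [← mul_assoc, ← pow_succ] at this
    · intro n hn
      cases n with
      | zero => simpa using hx
      | succ n =>
        have := Nat.find_min (h (b * x)) (Nat.lt_of_succ_lt_succ hn)
        rwa [← mul_assoc, ← pow_succ] at this
  rcases u.mem_or_compl_mem {x | Even (Nat.find (h x))} with hE | hE
  · refine ⟨Q ∩ {x | Even (Nat.find (h x))}, Filter.inter_mem hQ hE, ?_⟩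
    rintro x ⟨hx, hx2⟩ ⟨_, hy⟩
    simp only [Set.mem_setOf_eq] at hx2 hy
    rw [key x hx, Nat.even_add_one] at hx2
    exact hx2 hy
  · refine ⟨Q ∩ {x | Even (Nat.find (h x))}ᶜ, Filter.inter_mem hQ hE, ?_⟩
    rintro x ⟨hx, hx2⟩ ⟨_, hy⟩
    simp only [Set.mem_setOf_eq, Set.mem_compl_iff] at hx2 hy
    rw [key x hx, Nat.even_add_one] at hx2
    exact hx2 hy

theorem aux_descent (f : ℕ → ℕ) (h : ∀ k, f (k + 1) < f k) : False := by
  have : ∀ k, f k + k ≤ f 0 := by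
    intro k
    induction k with
    | zero => simp
    | succ k ih => have := h k; omega
  have := this (f 0 + 1)
  omega

theorem aux_translate {G : Type*} [Group G] [Countable G] (u : Ultrafilter G) (a : G)
    (ha : a ≠ 1) : ∃ V ∈ u, ∀ x ∈ V, a * x ∉ V := by
  obtain ⟨e, he⟩ := exists_injective_nat G
  rcases u.mem_or_compl_mem {x | e (a * x) < e x} with hE | hE
  · refine aux_parity u a _ hE ?_
    intro x
    by_contra! hc
    refine aux_descent (fun k => e (a ^ k * x)) fun k => ?_
    have := hc k
    simp only [Set.mem_setOf_eq] at this
    rwa [← mul_assoc, ← pow_succ'] at this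
  · obtain ⟨V, hV, h⟩ := aux_parity u a⁻¹ _ hE (by
      intro x
      by_contra! hc
      refine aux_descent (fun k => e (a⁻¹ ^ k * x)) fun k => ?_
      have := hc (k + 1)
      simp only [Set.mem_compl_iff, Set.mem_setOf_eq, not_lt] at this
      rw [← mul_assoc, pow_succ', mul_inv_cancel_left, ← pow_succ'] at this
      refine lt_of_le_of_ne this fun h => ha ?_
      have := he h
      rw [pow_succ', mul_assoc] at this
      simpa using this)
    refine ⟨V, hV, fun x hx hax => ?_⟩
    have := h _ hax
    rw [inv_mul_cancel_left] at this
    exact this hx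

/-- A free infinitary Schur ultrafilter on a countable group is not a P-point. -/
theorem infSchur_not_ppoint {G : Type*} [Group G] [Countable G]
    (u : Ultrafilter G) (hfree : IsFreeUltrafilter u) (hinf : IsInfSchurUltrafilter u) :
    ¬ IsPPoint u := by
  intro hP
  have hV : ∀ a : G, ∃ V ∈ u, a ≠ 1 → ∀ x ∈ V, a * x ∉ V := by
    intro a
    by_cases ha : a = 1
    · exact ⟨Set.univ, Filter.univ_mem, fun h => absurd ha h⟩
    · obtain ⟨V, hV, h⟩ := aux_translate u a ha
      exact ⟨V, hV, fun _ => h⟩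
  choose V hVu hV using hV
  obtain ⟨s, hs⟩ := exists_surjective_nat G
  obtain ⟨U, hU, hfin⟩ := hP (fun n => V (s n)) (fun n => hVu _)
  have h1 : ({1} : Set G)ᶜ ∈ u := by
    rcases u.mem_or_compl_mem {1} with h | h
    · exact absurd (Set.finite_singleton 1) (hfree _ h)
    · exact h
  obtain ⟨a, ha, B, hB, hBinf, hab⟩ := hinf _ (Filter.inter_mem hU h1)
  obtain ⟨n, rfl⟩ := hs a
  have hf := hfin n
  refine hBinf ((hf.union (hf.preimage (mul_right_injective (s n)).injOn)).subset ?_)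
  intro b hb
  by_cases hbV : b ∈ V (s n)
  · exact Or.inr ⟨(hab b hb).1, hV (s n) ha.2 b hbV⟩
  · exact Or.inl ⟨(hB hb).1, hbV⟩
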